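/- (Empirical-process bound, Lemma A.1.) The supremum sup_{s ∈ 𝒳, ‖s−s0‖_∞ < ε̃_n} | n^{−1} Σ_{i=1}^n 𝒲_i f_s(z_i) | is O_{ℙ_{s0}}(ε̃_n²): for every η > 0 there exists a constant T > 0 such that limsup_{n→∞} ℙ_{s0}( sup_{s ∈ 𝒳, ‖s−s0‖_∞ < ε̃_n} | n^{−1} Σ_{i=1}^n 𝒲_i f_s(z_i) | ≥ T·ε̃_n² ) ≤ η. -/

import Mathlib

/-!
The supremum is dominated by one random variable that does not involve `s`, so that a first-moment
(Markov) bound suffices and neither entropy nor exponential inequalities are needed.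

Cut `{0, …, n-1}` into blocks of length `m` and let `A i` be the sum of the noise `𝒲` from the
start of the block of `i` up to `i`. Summation by parts inside the blocks (`sum_mul_eq_blockSum`)
turns `∑ 𝒲 i * f_s (z i)` into a sum of the `A i` against the increments of `f_s` along the grid,
plus one term `A i * f_s (z i)` for each block end. The increments are at most `L / n` and the
values at most `c * ε` (`abs_fS_sub_le`, `abs_fS_le`), with `L` and `c` depending on `κ, K, M` only;
replacing them by these bounds gives the `majorant`.

The `𝒲 i` are independent, centred and have a common finite variance, hence `E |A i| = O(√m)`
(`integral_abs_sum_noise_le`), and the mean of the majorant (which carries the factor `1 / n`) is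
`O(√m / n + ε / √m)`. For `m = ⌈ε⁻²⌉` both terms are `O(ε ^ 2)`, because `ε ^ 3 * n` is bounded
below and `ε` is bounded above (`block_length_bound`, `rateCond.bounds`).
-/

noncomputable section
open MeasureTheory ProbabilityTheory Real Filter

def memX (κ K M : ℝ) (s : ℝ → ℝ) : Prop :=
  (∀ u ∈ Set.Icc (0:ℝ) 1, s u ∈ Set.Icc κ K) ∧
  DifferentiableOn ℝ s (Set.Icc (0:ℝ) 1) ∧
  ∀ u ∈ Set.Icc (0:ℝ) 1, |derivWithin s (Set.Icc (0:ℝ) 1) u| ≤ M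

def vin (s : ℝ → ℝ) (n i : ℕ) : ℝ := ∫ u in (((i:ℝ) - 1)/n)..((i:ℝ)/n), (s u)^2

def gaussDensity (v y : ℝ) : ℝ := (Real.sqrt (2 * π * v))⁻¹ * Real.exp (-(y^2) / (2*v))

def fS (s0 s : ℝ → ℝ) (n : ℕ) (z : ℝ) : ℝ :=
  (∫ u in z..(z + 1/n), ((s0 u)^2 - (s u)^2)) / (∫ u in z..(z + 1/n), (s u)^2)

def supDist (s t : ℝ → ℝ) : ℝ := ⨆ u : Set.Icc (0:ℝ) 1, |s u.1 - t u.1|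

def l2DistSq (s t : ℝ → ℝ) : ℝ := ∫ u in (0:ℝ)..1, (s u - t u)^2

def jointLaw (s0 : ℝ → ℝ) (n : ℕ) : Measure (Fin n → ℝ) :=
  Measure.pi fun i => gaussianReal 0 (Real.toNNReal (vin s0 n (i.1 + 1)))

def Ln (s : ℝ → ℝ) (n : ℕ) (y : Fin n → ℝ) : ℝ :=
  ∏ i : Fin n, gaussDensity (vin s n (i.1 + 1)) (y i)

def likRatio (s0 s : ℝ → ℝ) (n : ℕ) (y : Fin n → ℝ) : ℝ :=
  ∏ i : Fin n, gaussDensity (vin s n (i.1 + 1)) (y i) / gaussDensity (vin s0 n (i.1 + 1)) (y i)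

def rateCond (ε : ℕ → ℝ) : Prop :=
  (∀ n, 0 < ε n) ∧ ∃ a b : ℝ, 0 < a ∧ a ≤ b ∧
    ∀ n : ℕ, 2 ≤ n →
      a * (n:ℝ) ^ (-(1:ℝ)/3) * Real.log n ≤ ε n ∧ ε n ≤ b * (n:ℝ) ^ (-(1:ℝ)/3) * Real.log n

def Meps (K ε : ℝ) : ℕ := sInf {m : ℕ | 0 < m ∧ 4 * K^2 ≤ (2:ℝ)^m * ε^2}

def sigma0Sq : ℝ := 2 * ∫ z, (1 - z^2)^2 * Real.exp (|1 - z^2| / 3) ∂(gaussianReal 0 1)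

/-! ### Summation by parts over blocks -/

/-- The sum of `W` from the start of the length-`m` block containing `i` up to and including `i`. -/
def blockSum (m : ℕ) (W : ℕ → ℝ) (i : ℕ) : ℝ := ∑ j ∈ Finset.Ico (m * (i / m)) (i + 1), W j

/-- Summation by parts inside each block of length `m`. -/
lemma sum_mul_eq_blockSum (m : ℕ) (W g : ℕ → ℝ) (n : ℕ) :
    ∑ i ∈ Finset.range n, W i * g i =
      (∑ j ∈ Finset.Ico (m * (n / m)) n, W j) * g n +
      ∑ i ∈ Finset.range n, blockSum m W i * (g i - if m ∣ i + 1 then 0 else g (i + 1)) := by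
  induction n with
  | zero => simp
  | succ n ih =>
    have h1 : blockSum m W n = (∑ j ∈ Finset.Ico (m * (n / m)) n, W j) + W n := by
      rw [blockSum, Finset.sum_Ico_succ_top (Nat.mul_div_le n m)]
    rw [Finset.sum_range_succ, ih, Finset.sum_range_succ]
    by_cases hd : m ∣ n + 1
    · rw [Nat.mul_div_cancel' hd, if_pos hd, h1]
      simp
      ring
    · have h2 : (n + 1) / m = n / m := by
        rw [Nat.succ_div, if_neg hd, add_zero]
      rw [if_neg hd, h2, Finset.sum_Ico_succ_top (Nat.mul_div_le n m), h1]
      ring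

/-- The weight of `|blockSum m W i|`: the increment bound `L`, plus the size bound `B` where a
block, or the whole range, ends. -/
def blockWeight (m n : ℕ) (L B : ℝ) (i : ℕ) : ℝ :=
  L + (if m ∣ i + 1 then B else 0) + (if i + 1 = n then B else 0)

lemma blockWeight_nonneg (m n : ℕ) {L B : ℝ} (hL : 0 ≤ L) (hB : 0 ≤ B) (i : ℕ) :
    0 ≤ blockWeight m n L B i := by
  unfold blockWeight; positivity

/-- The deterministic bound: a weighted sum is controlled by the in-block partial sums of `W`,
uniformly over all `g` with size at most `B` and increments at most `L`. -/
lemma abs_sum_mul_le (m : ℕ) (W g : ℕ → ℝ) (n : ℕ) {L B : ℝ} (hL : 0 ≤ L)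
    (hB : 0 ≤ B) (hg : ∀ i < n, |g i| ≤ B) (hgL : ∀ i, i + 1 < n → |g i - g (i + 1)| ≤ L) :
    |∑ i ∈ Finset.range n, W i * g i| ≤
      ∑ i ∈ Finset.range n, |blockSum m W i| * blockWeight m n L B i := by
  -- cutting `g` off at `n` removes the boundary term of the summation by parts
  set g' : ℕ → ℝ := fun i => if i < n then g i else 0 with hg'
  have h0 : ∑ i ∈ Finset.range n, W i * g i = ∑ i ∈ Finset.range n, W i * g' i := by
    refine Finset.sum_congr rfl fun i hi => ?_
    simp [hg', Finset.mem_range.mp hi]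
  have hn : g' n = 0 := by simp [hg']
  rw [h0, sum_mul_eq_blockSum m, hn, mul_zero, zero_add]
  refine (Finset.abs_sum_le_sum_abs _ _).trans (Finset.sum_le_sum fun i hi => ?_)
  rw [abs_mul]
  refine mul_le_mul_of_nonneg_left ?_ (abs_nonneg _)
  have hi := Finset.mem_range.mp hi
  have h1 := hg i hi
  unfold blockWeight
  by_cases hd : m ∣ i + 1
  · simp only [hg', hi, if_pos, hd, sub_zero]
    split_ifs <;> linarith
  · by_cases hl : i + 1 = n
    · have hlt : ¬ i + 1 < n := by omega
      simp only [hg', hi, hl, if_true, if_false, lt_irrefl, ite_self, sub_zero]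
      split_ifs <;> linarith
    · have hlt : i + 1 < n := by omega
      have := hgL i hlt
      simp [hg', hi, hd, hl, hlt]
      linarith

lemma sum_blockWeight_le (m n : ℕ) {L B : ℝ} (hB : 0 ≤ B) :
    ∑ i ∈ Finset.range n, blockWeight m n L B i ≤ n * L + B * (n / m) + B := by
  unfold blockWeight
  rw [Finset.sum_add_distrib, Finset.sum_add_distrib, ← Finset.sum_filter, Finset.sum_const,
    Finset.sum_const, Nat.card_multiples, Finset.card_range, nsmul_eq_mul, nsmul_eq_mul]
  have h1 : ((n / m : ℕ) : ℝ) ≤ n / m := Nat.cast_div_le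
  have h2 : ∑ i ∈ Finset.range n, (if i + 1 = n then B else 0) ≤ B := by
    rcases n with _ | n
    · simpa using hB
    · simp
  nlinarith [mul_le_mul_of_nonneg_right h1 hB]

lemma card_block_le {m : ℕ} (hm : 0 < m) (i : ℕ) :
    (Finset.Ico (m * (i / m)) (i + 1)).card ≤ m := by
  rw [Nat.card_Ico]
  have := Nat.div_add_mod i m
  have := Nat.mod_lt i hm
  omega

/-! ### Moments of the noise -/

/-- The second moment of `1 - Z ^ 2` for a standard Gaussian `Z` (its value, `2`, is not needed). -/
def noiseVar : ℝ := ∫ z, (1 - z ^ 2) ^ 2 ∂(gaussianReal 0 1)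

lemma noiseVar_nonneg : 0 ≤ noiseVar := integral_nonneg fun _ => sq_nonneg _

lemma memLp_noise : MemLp (fun z : ℝ => 1 - z ^ 2) 2 (gaussianReal 0 1) := by
  have h4 : MemLp (id : ℝ → ℝ) 4 (gaussianReal 0 1) := by
    exact_mod_cast memLp_id_gaussianReal (μ := 0) (v := 1) 4
  have : ENNReal.HolderTriple 4 4 2 := ⟨by
    rw [← two_mul, show (4 : ENNReal) = 2 * 2 by norm_num,
      ENNReal.mul_inv (by simp) (by simp), ← mul_assoc,
      ENNReal.mul_inv_cancel (by simp) (by simp), one_mul]⟩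
  have h2 : MemLp ((id : ℝ → ℝ) * id) 2 (gaussianReal 0 1) := MemLp.mul h4 h4
  have h1 : MemLp (fun _ : ℝ => (1 : ℝ)) 2 (gaussianReal 0 1) := memLp_const 1
  refine (h1.sub h2).congr_norm (by fun_prop) (ae_of_all _ fun x => ?_)
  simp [pow_two]

lemma integral_noise : ∫ z, (1 - z ^ 2) ∂(gaussianReal 0 1) = 0 := by
  have hv := variance_fun_id_gaussianReal (μ := 0) (v := 1)
  rw [variance_of_integral_eq_zero (by fun_prop) (by simp)] at hv
  have hi : Integrable (fun z : ℝ => z ^ 2) (gaussianReal 0 1) := by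
    have := memLp_id_gaussianReal (μ := 0) (v := 1) 2
    exact this.integrable_sq
  rw [integral_sub (integrable_const _) hi, hv]
  simp

/-- The normalised noise `1 - Y ^ 2 / v` has the same law whatever the variance `v > 0`. -/
lemma noise_law {v : ℝ} (hv : 0 < v) :
    (gaussianReal 0 v.toNNReal).map (fun y => 1 - y ^ 2 / v) =
      (gaussianReal 0 1).map (fun z => 1 - z ^ 2) := by
  have h : gaussianReal 0 v.toNNReal = (gaussianReal 0 1).map (fun z => √v * z) := by
    rw [gaussianReal_map_const_mul]
    congr 1
    · simp
    · ext
      simp [Real.sq_sqrt hv.le, hv.le]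
  rw [h, Measure.map_map (by fun_prop) (by fun_prop)]
  congr 1
  ext z
  simp only [Function.comp]
  rw [mul_pow, Real.sq_sqrt hv.le, mul_div_cancel_left₀ _ (ne_of_gt hv)]

/-- Coordinate `j` of the noise `1 - y ^ 2 / v`, extended by zero to all natural indices. -/
def noise (n : ℕ) (v : ℕ → ℝ) (j : ℕ) (y : Fin n → ℝ) : ℝ :=
  if h : j < n then 1 - (y ⟨j, h⟩) ^ 2 / v j else 0

/-- A sum of at most `m` coordinates of the noise has first absolute moment `O(√m)`. -/
lemma integral_abs_sum_noise_le (n : ℕ) (v : ℕ → ℝ) (hv : ∀ j < n, 0 < v j) (s : Finset ℕ)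
    (m : ℕ) (hs : ∀ j ∈ s, j < n) (hm : s.card ≤ m) :
    Integrable (fun y => |∑ j ∈ s, noise n v j y|)
        (Measure.pi fun i : Fin n => gaussianReal 0 (v i).toNNReal) ∧
      ∫ y, |∑ j ∈ s, noise n v j y|
        ∂(Measure.pi fun i : Fin n => gaussianReal 0 (v i).toNNReal) ≤
          √noiseVar * √m := by
  set μ := Measure.pi fun i : Fin n => gaussianReal 0 (v i).toNNReal with hμ
  have hmap : ∀ j < n, μ.map (noise n v j) = (gaussianReal 0 1).map (fun z => 1 - z ^ 2) := by
    intro j hj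
    have e : noise n v j = (fun x : ℝ => 1 - x ^ 2 / v j) ∘ Function.eval (⟨j, hj⟩ : Fin n) := by
      ext y; simp [noise, hj]
    rw [e, ← Measure.map_map (by fun_prop) (by fun_prop),
      (measurePreserving_eval _ (⟨j, hj⟩ : Fin n)).map_eq, noise_law (hv j hj)]
  have hmeas : ∀ j, Measurable (noise n v j) := by
    intro j
    by_cases hj : j < n
    · have : noise n v j = fun y => 1 - (y ⟨j, hj⟩) ^ 2 / v j := by ext y; simp [noise, hj]
      rw [this]; fun_prop
    · have : noise n v j = fun _ => 0 := by ext y; simp [noise, hj]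
      rw [this]; fun_prop
  have hid : ∀ j < n, IdentDistrib (noise n v j) (fun z : ℝ => 1 - z ^ 2) μ (gaussianReal 0 1) :=
    fun j hj => ⟨(hmeas j).aemeasurable, by fun_prop, hmap j hj⟩
  have hLp : ∀ j < n, MemLp (noise n v j) 2 μ := fun j hj => (hid j hj).memLp_iff.2 memLp_noise
  have hmean : ∀ j < n, ∫ y, noise n v j y ∂μ = 0 := fun j hj => by
    rw [(hid j hj).integral_eq, integral_noise]
  have hvar : ∀ j < n, Var[noise n v j; μ] = noiseVar := fun j hj => by
    rw [(hid j hj).variance_eq, variance_of_integral_eq_zero (by fun_prop) integral_noise]; rfl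
  have hind : (s : Set ℕ).Pairwise fun i j => IndepFun (noise n v i) (noise n v j) μ := by
    intro i hi j hj hij
    have hi' := hs i hi
    have hj' := hs j hj
    have hI : iIndepFun (fun (i : Fin n) (y : Fin n → ℝ) => 1 - (y i) ^ 2 / v i) μ :=
      iIndepFun_pi (X := fun (i : Fin n) (x : ℝ) => 1 - x ^ 2 / v i) (fun i => by fun_prop)
    have := hI.indepFun (i := ⟨i, hi'⟩) (j := ⟨j, hj'⟩) (by simpa using hij)
    have ei : noise n v i = fun y => 1 - (y ⟨i, hi'⟩) ^ 2 / v i := by ext y; simp [noise, hi']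
    have ej : noise n v j = fun y => 1 - (y ⟨j, hj'⟩) ^ 2 / v j := by ext y; simp [noise, hj']
    rw [ei, ej]
    exact this
  set S : (Fin n → ℝ) → ℝ := fun y => ∑ j ∈ s, noise n v j y with hS
  have hSe : S = ∑ j ∈ s, noise n v j := by ext y; simp [hS]
  have hSLp : MemLp S 2 μ := by
    rw [hSe]; exact memLp_finsetSum' s fun j hj => hLp j (hs j hj)
  have hSmean : ∫ y, S y ∂μ = 0 := by
    rw [hS, integral_finsetSum s fun j hj => (hLp j (hs j hj)).integrable (by norm_num)]
    exact Finset.sum_eq_zero fun j hj => hmean j (hs j hj)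
  have hSvar : ∫ y, S y ^ 2 ∂μ = s.card * noiseVar := by
    rw [← variance_of_integral_eq_zero hSLp.aestronglyMeasurable.aemeasurable hSmean, hSe,
      IndepFun.variance_sum (fun j hj => hLp j (hs j hj)) hind,
      Finset.sum_congr rfl fun j hj => hvar j (hs j hj), Finset.sum_const, nsmul_eq_mul]
  have hAbs : MemLp (fun y => |S y|) 2 μ := hSLp.abs
  refine ⟨hAbs.integrable (by norm_num), ?_⟩
  have h1 := variance_nonneg (fun y => |S y|) μ
  rw [variance_eq_sub hAbs] at h1
  simp only [Pi.pow_apply, sq_abs] at h1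
  rw [← Real.sqrt_mul noiseVar_nonneg]
  apply Real.le_sqrt_of_sq_le
  have hc : (s.card : ℝ) ≤ m := by exact_mod_cast hm
  nlinarith [noiseVar_nonneg]

/-! ### Size and increments of `f_s` -/

lemma memX.continuousOn_sq {κ K M : ℝ} {s : ℝ → ℝ} (hs : memX κ K M s) :
    ContinuousOn (fun u => s u ^ 2) (Set.Icc 0 1) :=
  hs.2.1.continuousOn.pow 2

lemma memX.intervalIntegrable_sq {κ K M : ℝ} {s : ℝ → ℝ} (hs : memX κ K M s) {z w : ℝ}
    (hz : 0 ≤ z) (hzw : z ≤ w) (hw : w ≤ 1) :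
    IntervalIntegrable (fun u => s u ^ 2) volume z w := by
  refine (hs.continuousOn_sq.mono ?_).intervalIntegrable
  rw [Set.uIcc_of_le hzw]
  exact Set.Icc_subset_Icc hz hw

lemma memX.integral_sq_bounds {κ K M : ℝ} (hκ : 0 < κ) {s : ℝ → ℝ} (hs : memX κ K M s) {z h : ℝ}
    (hz : 0 ≤ z) (hh : 0 ≤ h) (hw : z + h ≤ 1) :
    κ ^ 2 * h ≤ ∫ u in z..(z + h), s u ^ 2 ∧ ∫ u in z..(z + h), s u ^ 2 ≤ K ^ 2 * h := by
  have hi := hs.intervalIntegrable_sq hz (by linarith : z ≤ z + h) hw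
  have hb : ∀ u ∈ Set.Icc z (z + h), κ ^ 2 ≤ s u ^ 2 ∧ s u ^ 2 ≤ K ^ 2 := by
    intro u hu
    obtain ⟨h1, h2⟩ := hs.1 u ⟨hz.trans hu.1, hu.2.trans hw⟩
    exact ⟨by gcongr, pow_le_pow_left₀ (hκ.le.trans h1) h2 2⟩
  constructor
  · have := intervalIntegral.integral_mono_on (by linarith) intervalIntegrable_const hi
      fun u hu => (hb u hu).1
    simp only [intervalIntegral.integral_const, smul_eq_mul] at this
    linarith
  · have := intervalIntegral.integral_mono_on (by linarith) hi intervalIntegrable_const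
      fun u hu => (hb u hu).2
    simp only [intervalIntegral.integral_const, smul_eq_mul] at this
    linarith

lemma memX.abs_sq_sub_sq_le {κ K M : ℝ} (hκ : 0 < κ) {s : ℝ → ℝ} (hs : memX κ K M s)
    {u w : ℝ} (hu : u ∈ Set.Icc (0 : ℝ) 1) (hw : w ∈ Set.Icc (0 : ℝ) 1) :
    |s w ^ 2 - s u ^ 2| ≤ 2 * K * M * |w - u| := by
  have h1 := (convex_Icc (0 : ℝ) 1).norm_image_sub_le_of_norm_derivWithin_le hs.2.1 hs.2.2 hu hw
  rw [Real.norm_eq_abs, Real.norm_eq_abs] at h1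
  obtain ⟨a1, a2⟩ := hs.1 u hu
  obtain ⟨b1, b2⟩ := hs.1 w hw
  have h2 : |s w + s u| ≤ 2 * K := by rw [abs_of_nonneg (by linarith)]; linarith
  rw [sq_sub_sq, abs_mul]
  calc _ ≤ 2 * K * (M * |w - u|) := mul_le_mul h2 h1 (abs_nonneg _) (by linarith)
    _ = _ := by ring

/-- The integrals of `s ^ 2` over two adjacent cells of length `h` differ by `O(h ^ 2)`. -/
lemma memX.abs_integral_shift_le {κ K M : ℝ} (hκ : 0 < κ) {s : ℝ → ℝ} (hs : memX κ K M s)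
    {z h : ℝ} (hz : 0 ≤ z) (hh : 0 ≤ h) (hw : z + h + h ≤ 1) :
    |(∫ u in (z + h)..(z + h + h), s u ^ 2) - ∫ u in z..(z + h), s u ^ 2| ≤
      2 * K * M * h * h := by
  have e : (∫ u in (z + h)..(z + h + h), s u ^ 2) = ∫ u in z..(z + h), s (u + h) ^ 2 :=
    (intervalIntegral.integral_comp_add_right (fun u => s u ^ 2) h).symm
  have i1 : IntervalIntegrable (fun u => s (u + h) ^ 2) volume z (z + h) := by
    refine ContinuousOn.intervalIntegrable ?_
    refine hs.continuousOn_sq.comp (f := fun u => u + h) (by fun_prop) fun u hu => ?_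
    rw [Set.uIcc_of_le (by linarith)] at hu
    exact ⟨by linarith [hu.1], by linarith [hu.2]⟩
  have i2 := hs.intervalIntegrable_sq hz (by linarith : z ≤ z + h) (by linarith)
  rw [e, ← intervalIntegral.integral_sub i1 i2]
  have := intervalIntegral.norm_integral_le_of_norm_le_const (a := z) (b := z + h)
    (f := fun u => s (u + h) ^ 2 - s u ^ 2) (C := 2 * K * M * h) fun u hu => by
      rw [Set.uIoc_of_le (by linarith)] at hu
      have := hs.abs_sq_sub_sq_le hκ (u := u) (w := u + h) ⟨by linarith [hu.1], by linarith [hu.2]⟩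
        ⟨by linarith [hu.1], by linarith [hu.2]⟩
      rwa [add_sub_cancel_left, abs_of_nonneg hh] at this
  rwa [add_sub_cancel_left, abs_of_nonneg hh] at this

lemma abs_sub_le_supDist {κ K M : ℝ} {s t : ℝ → ℝ} (hs : memX κ K M s) (ht : memX κ K M t)
    {u : ℝ} (hu : u ∈ Set.Icc (0 : ℝ) 1) : |s u - t u| ≤ supDist s t := by
  -- the supremum is over a bounded family, so it is not the junk value `0`
  refine le_ciSup (f := fun u : Set.Icc (0 : ℝ) 1 => |s u.1 - t u.1|) ⟨K - κ, ?_⟩ ⟨u, hu⟩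
  rintro _ ⟨w, rfl⟩
  obtain ⟨a1, a2⟩ := hs.1 w w.2
  obtain ⟨b1, b2⟩ := ht.1 w w.2
  exact abs_le.2 ⟨by linarith, by linarith⟩

/-- `f_s` is at most of order `ε` on the `ε`-ball around `s0`. -/
lemma abs_fS_le {κ K M : ℝ} (hκ : 0 < κ) {s0 s : ℝ → ℝ} (hs0 : memX κ K M s0)
    (hs : memX κ K M s) {ε : ℝ} (hε : supDist s s0 < ε) {n i : ℕ} (hi : i < n) :
    |fS s0 s n ((i : ℝ) / n)| ≤ 2 * K / κ ^ 2 * ε := by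
  have hn : (0 : ℝ) < n := by exact_mod_cast (by omega : 0 < n)
  have hi' : (i : ℝ) + 1 ≤ n := by exact_mod_cast hi
  have hh : (0 : ℝ) < 1 / n := by positivity
  have hz : (0 : ℝ) ≤ i / n := by positivity
  have hw : (i : ℝ) / n + 1 / n ≤ 1 := by rw [← add_div, div_le_one hn]; exact hi'
  set z : ℝ := i / n
  set h : ℝ := 1 / n
  have hq := (hs.integral_sq_bounds hκ hz hh.le hw).1
  have hp : |∫ u in z..(z + h), (s0 u ^ 2 - s u ^ 2)| ≤ 2 * K * ε * h := by
    have := intervalIntegral.norm_integral_le_of_norm_le_const (a := z) (b := z + h)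
      (f := fun u => s0 u ^ 2 - s u ^ 2) (C := 2 * K * ε) fun u hu => by
        rw [Set.uIoc_of_le (by linarith)] at hu
        have hu' : u ∈ Set.Icc (0 : ℝ) 1 := ⟨by linarith [hu.1], by linarith [hu.2]⟩
        obtain ⟨a1, a2⟩ := hs.1 u hu'
        obtain ⟨b1, b2⟩ := hs0.1 u hu'
        have h1 := (abs_sub_le_supDist hs hs0 hu').trans hε.le
        have h2 : |s0 u + s u| ≤ 2 * K := by rw [abs_of_nonneg (by linarith)]; linarith
        rw [Real.norm_eq_abs, sq_sub_sq, abs_mul, abs_sub_comm (s0 u)]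
        exact mul_le_mul h2 h1 (abs_nonneg _) (by linarith)
    rwa [add_sub_cancel_left, abs_of_nonneg hh.le] at this
  have hκh : 0 < κ ^ 2 * h := by positivity
  unfold fS
  rw [abs_div, abs_of_pos (hκh.trans_le hq), div_le_iff₀ (hκh.trans_le hq)]
  have hεK : 0 ≤ 2 * K * ε := by
    by_contra hc
    nlinarith [abs_nonneg (∫ u in z..(z + h), (s0 u ^ 2 - s u ^ 2))]
  calc _ ≤ 2 * K * ε * h := hp
    _ = 2 * K / κ ^ 2 * ε * (κ ^ 2 * h) := by field_simp
    _ ≤ _ := by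
      refine mul_le_mul_of_nonneg_left hq ?_
      have : 2 * K / κ ^ 2 * ε = 2 * K * ε / κ ^ 2 := by ring
      rw [this]; positivity

/-- On cells inside `[0,1]`, `f_s + 1` is a ratio of two integrals, each of them regular in `z`. -/
lemma fS_eq {κ K M : ℝ} (hκ : 0 < κ) {s0 s : ℝ → ℝ} (hs0 : memX κ K M s0)
    (hs : memX κ K M s) {n : ℕ} {z : ℝ} (hn : 0 < n) (hz : 0 ≤ z) (hw : z + 1 / n ≤ 1) :
    fS s0 s n z =
      (∫ u in z..(z + 1 / n), s0 u ^ 2) / (∫ u in z..(z + 1 / n), s u ^ 2) - 1 := by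
  have hh : (0 : ℝ) < 1 / n := by positivity
  have hq := (hs.integral_sq_bounds hκ hz hh.le hw).1
  have hκh : 0 < κ ^ 2 * (1 / n : ℝ) := by positivity
  unfold fS
  rw [intervalIntegral.integral_sub (hs0.intervalIntegrable_sq hz (by linarith) hw)
    (hs.intervalIntegrable_sq hz (by linarith) hw), sub_div, div_self (ne_of_gt (hκh.trans_le hq))]

/-- `f_s` is Lipschitz along the grid, with a constant uniform over the class. -/
lemma abs_fS_sub_le {κ K M : ℝ} (hκ : 0 < κ) {s0 s : ℝ → ℝ} (hs0 : memX κ K M s0)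
    (hs : memX κ K M s) {n i : ℕ} (hi : i + 1 < n) :
    |fS s0 s n ((i : ℝ) / n) - fS s0 s n (((i + 1 : ℕ) : ℝ) / n)| ≤
      (2 * K * M / κ ^ 2 + 2 * K ^ 3 * M / κ ^ 4) / n := by
  have hn0 : 0 < n := by omega
  have hn : (0 : ℝ) < n := by exact_mod_cast hn0
  have hi' : (i : ℝ) + 1 + 1 ≤ n := by exact_mod_cast hi
  have hh : (0 : ℝ) < 1 / n := by positivity
  have hz : (0 : ℝ) ≤ i / n := by positivity
  have hw : (i : ℝ) / n + 1 / n + 1 / n ≤ 1 := by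
    rw [← add_div, ← add_div, div_le_one hn]; exact hi'
  have e : (((i + 1 : ℕ) : ℝ) / n) = (i : ℝ) / n + 1 / n := by push_cast; ring
  rw [e, fS_eq hκ hs0 hs hn0 hz (by linarith), fS_eq hκ hs0 hs hn0 (by linarith) hw]
  have eL : (2 * K * M / κ ^ 2 + 2 * K ^ 3 * M / κ ^ 4) / n =
    (2 * K * M / κ ^ 2 + 2 * K ^ 3 * M / κ ^ 4) * (1 / n : ℝ) := by ring
  rw [eL]
  generalize (i : ℝ) / n = z at *
  generalize (1 / n : ℝ) = h at *
  have hp := hs0.abs_integral_shift_le hκ hz hh.le hw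
  have hq := hs.abs_integral_shift_le hκ hz hh.le hw
  have hq1 := (hs.integral_sq_bounds hκ hz hh.le (by linarith)).1
  have hq2 := (hs.integral_sq_bounds hκ (by linarith) hh.le hw).1
  have hp2 := (hs0.integral_sq_bounds hκ (by linarith) hh.le hw)
  have hκh : 0 < κ ^ 2 * h := by positivity
  generalize (∫ u in z..(z + h), s u ^ 2) = q at *
  generalize (∫ u in z..(z + h), s0 u ^ 2) = p at *
  generalize (∫ u in (z + h)..(z + h + h), s u ^ 2) = q' at *
  generalize (∫ u in (z + h)..(z + h + h), s0 u ^ 2) = p' at *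
  have hq0 : 0 < q := hκh.trans_le hq1
  have hq0' : 0 < q' := hκh.trans_le hq2
  have hp0' : 0 < p' := hκh.trans_le hp2.1
  have key : p / q - 1 - (p' / q' - 1) = (p - p') / q + p' * (q' - q) / (q * q') := by
    field_simp; ring
  rw [key]
  have t1 : |(p - p') / q| ≤ 2 * K * M / κ ^ 2 * h := by
    rw [abs_div, abs_of_pos hq0, abs_sub_comm]
    calc _ ≤ 2 * K * M * h * h / (κ ^ 2 * h) :=
          div_le_div₀ ((abs_nonneg _).trans hp) hp hκh hq1
      _ = _ := by field_simp
  have t2 : |p' * (q' - q) / (q * q')| ≤ 2 * K ^ 3 * M / κ ^ 4 * h := by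
    rw [abs_div, abs_mul, abs_of_pos hp0', abs_of_pos (mul_pos hq0 hq0')]
    have hnn : p' * |q' - q| ≤ K ^ 2 * h * (2 * K * M * h * h) :=
      mul_le_mul hp2.2 hq (abs_nonneg _) (hp0'.le.trans hp2.2)
    calc _ ≤ K ^ 2 * h * (2 * K * M * h * h) / (κ ^ 2 * h * (κ ^ 2 * h)) :=
          div_le_div₀ ((by positivity : 0 ≤ p' * |q' - q|).trans hnn) hnn (by positivity)
            (mul_le_mul hq1 hq2 hκh.le hq0.le)
      _ = _ := by field_simp
  calc _ ≤ _ := abs_add_le _ _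
    _ ≤ _ := add_le_add t1 t2
    _ = _ := by ring

/-! ### Domination and rates -/

lemma jointLaw_eq (s0 : ℝ → ℝ) (n : ℕ) :
    jointLaw s0 n =
      Measure.pi fun i : Fin n => gaussianReal 0 (vin s0 n ((i : ℕ) + 1)).toNNReal := rfl

lemma vin_pos {κ K M : ℝ} (hκ : 0 < κ) {s : ℝ → ℝ} (hs : memX κ K M s) {n j : ℕ} (hj : j < n) :
    0 < vin s n (j + 1) := by
  have hn : (0 : ℝ) < n := by exact_mod_cast (by omega : 0 < n)
  have hj' : (j : ℝ) + 1 ≤ n := by exact_mod_cast hj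
  have h := (hs.integral_sq_bounds hκ (z := j / n) (h := 1 / n) (by positivity) (by positivity)
    (by rw [← add_div, div_le_one hn]; exact hj')).1
  have hpos : 0 < κ ^ 2 * (1 / n : ℝ) := by positivity
  unfold vin
  push_cast
  rw [add_sub_cancel_right, add_div]
  exact hpos.trans_le h

/-- A random variable free of `s` that dominates the supremum of the empirical process. -/
def majorant (s0 : ℝ → ℝ) (m n : ℕ) (L B : ℝ) (y : Fin n → ℝ) : ℝ :=
  (1 / (n : ℝ)) * ∑ i ∈ Finset.range n,
    |blockSum m (fun j => noise n (fun j => vin s0 n (j + 1)) j y) i| * blockWeight m n L B i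

lemma majorant_nonneg (s0 : ℝ → ℝ) (m n : ℕ) {L B : ℝ} (hL : 0 ≤ L) (hB : 0 ≤ B)
    (y : Fin n → ℝ) : 0 ≤ majorant s0 m n L B y :=
  mul_nonneg (by positivity) (Finset.sum_nonneg fun i _ =>
    mul_nonneg (abs_nonneg _) (blockWeight_nonneg m n hL hB i))

lemma integral_majorant_le {κ K M : ℝ} (hκ : 0 < κ) {s0 : ℝ → ℝ} (hs0 : memX κ K M s0)
    {m : ℕ} (hm : 0 < m) (n : ℕ) {L B : ℝ} (hL : 0 ≤ L) (hB : 0 ≤ B) :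
    Integrable (majorant s0 m n L B) (jointLaw s0 n) ∧
      ∫ y, majorant s0 m n L B y ∂(jointLaw s0 n) ≤
        (1 / (n : ℝ)) * (√noiseVar * √m * (n * L + B * (n / m) + B)) := by
  have hA : ∀ i ∈ Finset.range n, _ := fun i hi =>
    integral_abs_sum_noise_le n (fun j => vin s0 n (j + 1)) (fun j hj => vin_pos hκ hs0 hj)
      (Finset.Ico (m * (i / m)) (i + 1)) m
      (fun j hj => by
        have := (Finset.mem_Ico.mp hj).2
        have := Finset.mem_range.mp hi
        omega) (card_block_le hm i)
  have hI : ∀ i ∈ Finset.range n, Integrable (fun y =>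
      |blockSum m (fun j => noise n (fun j => vin s0 n (j + 1)) j y) i| * blockWeight m n L B i)
      (jointLaw s0 n) := fun i hi => (hA i hi).1.mul_const _
  refine ⟨(integrable_finsetSum _ hI).const_mul _, ?_⟩
  unfold majorant
  rw [integral_const_mul, integral_finsetSum _ hI]
  refine mul_le_mul_of_nonneg_left ?_ (by positivity)
  calc _ ≤ ∑ i ∈ Finset.range n, √noiseVar * √m * blockWeight m n L B i := by
        refine Finset.sum_le_sum fun i hi => ?_
        rw [integral_mul_const]
        exact mul_le_mul_of_nonneg_right (hA i hi).2 (blockWeight_nonneg m n hL hB i)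
    _ = √noiseVar * √m * ∑ i ∈ Finset.range n, blockWeight m n L B i := by rw [Finset.mul_sum]
    _ ≤ _ := mul_le_mul_of_nonneg_left (sum_blockWeight_le m n hB) (by positivity)

lemma sSup_le_majorant {κ K M : ℝ} (hκ : 0 < κ) (hK : 0 ≤ K) (hM : 0 ≤ M) {s0 : ℝ → ℝ}
    (hs0 : memX κ K M s0) (m n : ℕ) {ε : ℝ} (hε : 0 ≤ ε) (y : Fin n → ℝ) :
    sSup {x : ℝ | ∃ s : ℝ → ℝ, memX κ K M s ∧ supDist s s0 < ε ∧
            x = |(1/(n:ℝ)) * ∑ i : Fin n,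
                  (1 - (y i)^2 / vin s0 n (i.1 + 1)) * fS s0 s n ((i.1 : ℝ)/n)|} ≤
      majorant s0 m n ((2 * K * M / κ ^ 2 + 2 * K ^ 3 * M / κ ^ 4) / n) (2 * K / κ ^ 2 * ε) y := by
  have hL : 0 ≤ (2 * K * M / κ ^ 2 + 2 * K ^ 3 * M / κ ^ 4) / n := by positivity
  have hB : 0 ≤ 2 * K / κ ^ 2 * ε := by positivity
  refine Real.sSup_le ?_ (majorant_nonneg s0 m n hL hB y)
  rintro x ⟨s, hs, hd, rfl⟩
  have e : ∑ i : Fin n, (1 - (y i)^2 / vin s0 n (i.1 + 1)) * fS s0 s n ((i.1 : ℝ)/n) =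
      ∑ i ∈ Finset.range n, noise n (fun j => vin s0 n (j + 1)) i y * fS s0 s n ((i : ℝ)/n) := by
    rw [← Fin.sum_univ_eq_sum_range
      (fun i => noise n (fun j => vin s0 n (j + 1)) i y * fS s0 s n ((i : ℝ)/n))]
    refine Finset.sum_congr rfl fun i _ => ?_
    simp [noise]
  rw [e, abs_mul, abs_of_nonneg (by positivity : (0 : ℝ) ≤ 1 / n)]
  refine mul_le_mul_of_nonneg_left ?_ (by positivity)
  exact abs_sum_mul_le m _ _ n hL hB (fun i hi => abs_fS_le hκ hs0 hs hd hi)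
    (fun i hi => abs_fS_sub_le hκ hs0 hs hi)

/-- All that is used about the rate: it is bounded, and `ε ^ 3` is at least of order `1 / n`. -/
lemma rateCond.bounds {ε : ℕ → ℝ} (h : rateCond ε) :
    ∃ a b : ℝ, 0 < a ∧ 0 < b ∧ ∀ n : ℕ, 3 ≤ n → a ≤ ε n ^ 3 * n ∧ ε n ≤ b := by
  obtain ⟨-, a, b, ha, hab, hn⟩ := h
  refine ⟨a ^ 3, 3 * b, by positivity, by linarith, fun n h3 => ?_⟩
  obtain ⟨h1, h2⟩ := hn n (by omega)
  have hn0 : (0 : ℝ) < n := by exact_mod_cast (by omega : 0 < n)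
  have hlog : 1 ≤ Real.log n := by
    rw [Real.le_log_iff_exp_le hn0]
    have : (3 : ℝ) ≤ n := by exact_mod_cast h3
    linarith [Real.exp_one_lt_d9]
  set r : ℝ := (n : ℝ) ^ (-(1 : ℝ) / 3) with hr
  have hr0 : 0 < r := Real.rpow_pos_of_pos hn0 _
  constructor
  · have hr3 : r ^ 3 * n = 1 := by
      rw [hr, ← Real.rpow_natCast, ← Real.rpow_mul hn0.le]
      norm_num
      rw [Real.rpow_neg_one, inv_mul_cancel₀ hn0.ne']
    have h4 : a * r ≤ ε n := (le_mul_of_one_le_right (by positivity) hlog).trans h1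
    calc a ^ 3 = (a * r) ^ 3 * n := by rw [mul_pow, mul_assoc, hr3, mul_one]
      _ ≤ _ := by gcongr
  · have hl := Real.log_le_rpow_div hn0.le (by norm_num : (0 : ℝ) < 1 / 3)
    have hb : 0 < b := ha.trans_le hab
    have hrr : r * (n : ℝ) ^ ((1 : ℝ) / 3) = 1 := by
      rw [hr, ← Real.rpow_add hn0]; norm_num
    calc ε n ≤ b * r * Real.log n := h2
      _ ≤ b * r * ((n : ℝ) ^ ((1 : ℝ) / 3) / (1 / 3)) := by gcongr
      _ = 3 * b * (r * (n : ℝ) ^ ((1 : ℝ) / 3)) := by ring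
      _ = 3 * b := by rw [hrr, mul_one]

/-- With blocks of length `⌈ε⁻²⌉` the first-moment bound is of order `ε ^ 2`. -/
lemma block_length_bound {a b c L σ ε : ℝ} (ha : 0 < a) (hc : 0 ≤ c) (hL : 0 ≤ L) (hσ : 0 ≤ σ)
    (hε : 0 < ε) {n : ℕ} (hn : 0 < n) (h1 : a ≤ ε ^ 3 * n) (h2 : ε ≤ b) :
    (1 / (n : ℝ)) * (σ * √(⌈(ε ^ 2)⁻¹⌉₊ : ℕ) *
        (n * (L / n) + c * ε * (n / (⌈(ε ^ 2)⁻¹⌉₊ : ℕ)) + c * ε)) ≤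
      σ * ((L + c * b) * ((1 + b) / a) + c) * ε ^ 2 := by
  have hn0 : (0 : ℝ) < n := by exact_mod_cast hn
  have hm1 : (ε ^ 2)⁻¹ ≤ (⌈(ε ^ 2)⁻¹⌉₊ : ℕ) := Nat.le_ceil _
  have hm2 : ((⌈(ε ^ 2)⁻¹⌉₊ : ℕ) : ℝ) ≤ (ε ^ 2)⁻¹ + 1 := (Nat.ceil_lt_add_one (by positivity)).le
  generalize ((⌈(ε ^ 2)⁻¹⌉₊ : ℕ) : ℝ) = m at *
  have hm0 : 0 < m := lt_of_lt_of_le (by positivity) hm1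
  have hs0 : 0 < √m := Real.sqrt_pos.2 hm0
  have lo : ε⁻¹ ≤ √m := Real.le_sqrt_of_sq_le (by rwa [inv_pow])
  have hi : √m ≤ ε⁻¹ + 1 := by
    rw [Real.sqrt_le_left (by positivity)]
    have : 0 < ε⁻¹ := by positivity
    rw [← inv_pow] at hm2
    nlinarith
  have f1 : √m / m ≤ ε := by
    rw [Real.sqrt_div_self]
    exact inv_le_of_inv_le₀ hε lo
  have f2 : √m / n ≤ (1 + b) / a * ε ^ 2 := by
    rw [div_le_iff₀ hn0]
    have hb : 0 < b := hε.trans_le h2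
    calc √m ≤ ε⁻¹ + 1 := hi
      _ = (1 + ε) / ε := by field_simp
      _ ≤ (1 + b) / ε := by gcongr
      _ = (1 + b) / a * a / ε := by field_simp
      _ ≤ (1 + b) / a * (ε ^ 3 * n) / ε := by gcongr
      _ = _ := by field_simp
  have key : (1 / (n : ℝ)) * (σ * √m * (n * (L / n) + c * ε * (n / m) + c * ε)) =
      σ * ((L + c * ε) * (√m / n) + c * ε * (√m / m)) := by
    field_simp
    ring
  rw [key]
  have hb : 0 < b := hε.trans_le h2
  calc _ ≤ σ * ((L + c * b) * ((1 + b) / a * ε ^ 2) + c * ε * ε) := by gcongr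
    _ = _ := by ring

theorem statement1 (κ K M : ℝ) (hκ : 0 < κ) (hκK : κ < K) (hM : 0 < M)
    (s0 : ℝ → ℝ) (hs0 : memX κ K M s0)
    (εt : ℕ → ℝ) (hrate : rateCond εt) :
    ∀ η : ℝ, 0 < η → ∃ T : ℝ, 0 < T ∧
      Filter.limsup (fun n : ℕ =>
        jointLaw s0 n {y : Fin n → ℝ | T * (εt n)^2 ≤
          sSup {x : ℝ | ∃ s : ℝ → ℝ, memX κ K M s ∧ supDist s s0 < εt n ∧
            x = |(1/(n:ℝ)) * ∑ i : Fin n,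
                  (1 - (y i)^2 / vin s0 n (i.1 + 1)) * fS s0 s n ((i.1 : ℝ)/n)|}}) atTop
      ≤ ENNReal.ofReal η := by
  obtain ⟨a, b, ha, hb, hab⟩ := hrate.bounds
  have hK : 0 < K := hκ.trans hκK
  set L : ℝ := 2 * K * M / κ ^ 2 + 2 * K ^ 3 * M / κ ^ 4 with hLdef
  set c : ℝ := 2 * K / κ ^ 2 with hcdef
  have hL : 0 < L := by positivity
  have hc : 0 < c := by positivity
  -- `E[majorant] ≤ C * ε ^ 2`; adding one to `√noiseVar` makes `C` positive
  set C : ℝ := (√noiseVar + 1) * ((L + c * b) * ((1 + b) / a) + c) with hCdef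
  have hC : 0 < C := by positivity
  intro η hη
  refine ⟨C / η, by positivity, ?_⟩
  refine Filter.limsup_le_of_le (by isBoundedDefault) ?_
  filter_upwards [Filter.eventually_ge_atTop 3] with n hn
  obtain ⟨h1, h2⟩ := hab n hn
  have hε := hrate.1 n
  set ε := εt n with hεdef
  set m : ℕ := ⌈(ε ^ 2)⁻¹⌉₊ with hmdef
  have hm : 0 < m := Nat.ceil_pos.2 (by positivity)
  have hLn : 0 ≤ L / n := by positivity
  have hB : 0 ≤ c * ε := by positivity
  have : IsProbabilityMeasure (jointLaw s0 n) := by rw [jointLaw_eq]; infer_instance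
  obtain ⟨hInt, hmean⟩ := integral_majorant_le hκ hs0 hm n hLn hB
  have hmean' : ∫ y, majorant s0 m n (L / n) (c * ε) y ∂(jointLaw s0 n) ≤ C * ε ^ 2 := by
    refine (hmean.trans (block_length_bound ha hc.le hL.le (Real.sqrt_nonneg _) hε (by omega)
      h1 h2)).trans ?_
    rw [hCdef]
    gcongr
    linarith
  calc _ ≤ jointLaw s0 n {y | C / η * ε ^ 2 ≤ majorant s0 m n (L / n) (c * ε) y} :=
        measure_mono fun y hy =>
          le_trans hy (sSup_le_majorant hκ hK.le hM.le hs0 m n hε.le y)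
    _ ≤ ENNReal.ofReal η := by
      rw [← ENNReal.ofReal_toReal (measure_ne_top (jointLaw s0 n) _)]
      apply ENNReal.ofReal_le_ofReal
      have hMk := mul_meas_ge_le_integral_of_nonneg
        (ae_of_all (jointLaw s0 n) fun y => majorant_nonneg s0 m n hLn hB y) hInt (C / η * ε ^ 2)
      have h3 := hMk.trans hmean'
      have h4 : C * ε ^ 2 = C / η * ε ^ 2 * η := by field_simp
      rw [h4] at h3
      exact le_of_mul_le_mul_left h3 (by positivity)
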